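/- Let X be a partial allocation and g an unallocated good with v_j(g) > 0. Suppose agent i champions agent j and agent j does not champion himself (j is not a most envious agent for X_j ∪ {g}), and let G_{ij} be a maximum-cardinality subset G of X_j ∪ {g} with v_i((X_j ∪ {g}) ∖ G) > v_i(X_i). Then G_{ij} ≠ ∅ and v_j(G_{ij}) ≥ v_j(g). -/

import Mathlib

open Finset

/-- Additive value of a bundle `S` under per-good valuation `v`. -/
noncomputable def val {G : Type*} (v : G → ℝ) (S : Finset G) : ℝ := ∑ g ∈ S, v g

/-- `X` is EFX: no agent `i` strongly envies agent `j`, i.e. for every good `g`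
in `X j`, `v_i(X_i) ≥ v_i(X_j \ {g})`. -/
def EFX {G : Type*} [DecidableEq G] (v : Fin 3 → G → ℝ) (X : Fin 3 → Finset G) : Prop :=
  ∀ i j : Fin 3, ∀ g ∈ X j, val (v i) (X j \ {g}) ≤ val (v i) (X i)

/-- `κ_X(i,S)`: the minimum cardinality of a subset `S' ⊆ S` with `v_i(S') > v_i(X_i)`. -/
noncomputable def kappa {G : Type*} (v : G → ℝ) (Xi S : Finset G) : ℕ :=
  sInf {n : ℕ | ∃ S' ⊆ S, S'.card = n ∧ val v Xi < val v S'}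

/-- Agent `i` is a most envious agent for the bundle `S` under allocation `X`. -/
def MostEnvious {G : Type*} (v : Fin 3 → G → ℝ) (X : Fin 3 → Finset G)
    (i : Fin 3) (S : Finset G) : Prop :=
  val (v i) (X i) < val (v i) S ∧
    ∀ k : Fin 3, val (v k) (X k) < val (v k) S →
      kappa (v i) (X i) S ≤ kappa (v k) (X k) S

/-- Any subset of `S` worth more than `Xi` bounds `kappa` from above. -/
lemma kappa_le_card {G : Type*} {v : G → ℝ} {Xi S T : Finset G} (hT : T ⊆ S)
    (h : val v Xi < val v T) : kappa v Xi S ≤ T.card :=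
  Nat.sInf_le ⟨T, hT, rfl, h⟩

/-- If `S` is worth more than `Xi`, then `kappa` is attained by some subset of `S`. -/
lemma exists_card_eq_kappa {G : Type*} {v : G → ℝ} {Xi S : Finset G}
    (h : val v Xi < val v S) :
    ∃ T ⊆ S, T.card = kappa v Xi S ∧ val v Xi < val v T :=
  Nat.sInf_mem (s := {n : ℕ | ∃ T ⊆ S, T.card = n ∧ val v Xi < val v T})
    ⟨S.card, S, Subset.rfl, rfl, h⟩

/-- Removing a maximum-cardinality set that keeps the value above that of `Xi` leaves a set of
cardinality at most `kappa`. -/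
lemma card_sdiff_le_kappa {G : Type*} [DecidableEq G] {v : G → ℝ} {Xi S H : Finset G}
    (hH : H ⊆ S) (hS : val v Xi < val v S)
    (hmax : ∀ H' ⊆ S, val v Xi < val v (S \ H') → H'.card ≤ H.card) :
    (S \ H).card ≤ kappa v Xi S := by
  obtain ⟨T, hTS, hcard, hT⟩ := exists_card_eq_kappa hS
  have hle := hmax (S \ T) sdiff_subset (by rwa [Finset.sdiff_sdiff_eq_self hTS])
  have hadd_T := card_sdiff_add_card_eq_card hTS
  have hadd_H := card_sdiff_add_card_eq_card hH
  omega

/-- Observation 7: if `i` champions `j`, `j` does not self-champion and `v_j(g) > 0`,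
then the lower-half bundle `G_ij` is nonempty and `v_j(G_ij) ≥ v_j(g)`. -/
theorem lower_half_valuable_for_championed {G : Type*} [DecidableEq G] (M : Finset G)
    (v : Fin 3 → G → ℝ) (hv : ∀ i : Fin 3, ∀ g ∈ M, 0 ≤ v i g)
    (X : Fin 3 → Finset G) (hXM : ∀ i, X i ⊆ M)
    (hdisj : ∀ i j, i ≠ j → Disjoint (X i) (X j))
    (g : G) (hg : g ∈ M) (hun : g ∉ X 0 ∪ X 1 ∪ X 2)
    (i j : Fin 3) (hch : MostEnvious v X i (X j ∪ {g}))
    (hpos : 0 < v j g)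
    (hnoself : ¬ MostEnvious v X j (X j ∪ {g}))
    (Gij : Finset G) (hGsub : Gij ⊆ X j ∪ {g})
    (hGval : val (v i) (X i) < val (v i) ((X j ∪ {g}) \ Gij))
    (hGmax : ∀ G' ⊆ X j ∪ {g},
      val (v i) (X i) < val (v i) ((X j ∪ {g}) \ G') → G'.card ≤ Gij.card) :
    Gij ≠ ∅ ∧ v j g ≤ val (v j) Gij := by
  have hgj : g ∉ X j := by
    simp only [mem_union, not_or] at hun
    fin_cases j
    exacts [hun.1.1, hun.1.2, hun.2]
  have hval : val (v j) (X j ∪ {g}) = val (v j) (X j) + v j g := by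
    rw [_root_.val, sum_union (disjoint_singleton_right.2 hgj), sum_singleton, _root_.val]
  have hle : val (v j) ((X j ∪ {g}) \ Gij) ≤ val (v j) (X j) := by
    by_contra! hlt
    exact hnoself ⟨by linarith, fun k hk =>
      (kappa_le_card sdiff_subset hlt).trans
        ((card_sdiff_le_kappa hGsub hch.1 hGmax).trans (hch.2 k hk))⟩
  have hsplit : val (v j) ((X j ∪ {g}) \ Gij) + val (v j) Gij = val (v j) (X j ∪ {g}) :=
    sum_sdiff hGsub
  have hvaluable : v j g ≤ val (v j) Gij := by linarith
  refine ⟨?_, hvaluable⟩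
  rintro rfl
  exact absurd hvaluable (by simpa [_root_.val] using hpos)
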